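/- arXiv:1104.4651 — 3 statements merged into one kernel-verified Lean document; each statement's English description precedes it below -/
import Mathlib

section
/- (Summability of Schwartz families.) Let v : ℝᵐ → (𝓢ₙ →L[ℂ] ℂ) be a Schwartz family, and let T : 𝓢ₙ →ₗ[ℂ] 𝓢ₘ be a linear map such that (T φ)(p) = v(p)(φ) for all φ ∈ 𝓢ₙ and p ∈ ℝᵐ (the operator generated by v). Then v is summable with respect to every tempered distribution: for every continuous linear functional a : 𝓢ₘ →L[ℂ] ℂ, the linear functional 𝓢ₙ → ℂ, φ ↦ a(T φ), is continuous, i.e., is a tempered distribution on ℝⁿ. -/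
/-- The Schwartz space `𝓢(ℝⁿ, ℂ)`. -/
abbrev Sch (n : ℕ) : Type := SchwartzMap (EuclideanSpace ℝ (Fin n)) ℂ

/-- A family `v : ℝᵐ → 𝓢ₙ'` of tempered distributions is a Schwartz family if the image
`p ↦ v p φ` of every test function `φ` is (given by) a Schwartz function on `ℝᵐ`. -/
def IsSchwartzFamily {n m : ℕ} (v : EuclideanSpace ℝ (Fin m) → (Sch n →L[ℂ] ℂ)) : Prop :=
  ∀ φ : Sch n, ∃ ψ : Sch m, ∀ p, ψ p = v p φ

open Filter Topology Uniformity LineDeriv in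
theorem sch_cauchy {n : ℕ} (u : ℕ → Sch n) (hu : CauchySeq u) (k l : ℕ) (ε : ℝ) (hε : 0 < ε) :
    ∃ N, ∀ i ≥ N, ∀ j ≥ N, ∀ x, ‖x‖ ^ k *
      ‖iteratedFDeriv ℝ l (u i) x - iteratedFDeriv ℝ l (u j) x‖ ≤ ε := by
  have hc : Continuous (SchwartzMap.seminorm ℝ k l : Sch n → ℝ) :=
    (schwartz_withSeminorms ℝ (EuclideanSpace ℝ (Fin n)) ℂ).continuous_seminorm (k, l)
  have hmem : {φ : Sch n | SchwartzMap.seminorm ℝ k l φ < ε} ∈ 𝓝 (0 : Sch n) :=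
    (isOpen_lt hc continuous_const).mem_nhds (by simpa using hε)
  have h2 : {p : Sch n × Sch n | SchwartzMap.seminorm ℝ k l (p.2 - p.1) < ε} ∈ 𝓤 (Sch n) := by
    rw [uniformity_eq_comap_nhds_zero]
    exact ⟨_, hmem, fun p hp => hp⟩
  obtain ⟨N, hN⟩ := cauchySeq_iff.1 hu _ h2
  refine ⟨N, fun i hi j hj x => ?_⟩
  have h3 := hN j hj i hi
  have h4 := SchwartzMap.le_seminorm ℝ k l (u i - u j) x
  have h5 : iteratedFDeriv ℝ l (u i - u j : Sch n) x
      = iteratedFDeriv ℝ l (u i) x - iteratedFDeriv ℝ l (u j) x := by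
    have : ((u i - u j : Sch n) : EuclideanSpace ℝ (Fin n) → ℂ) = (u i : _ → ℂ) - (u j : _ → ℂ) := by
      ext y; simp
    rw [this]
    exact iteratedFDeriv_sub_apply ((u i).smooth l).contDiffAt ((u j).smooth l).contDiffAt
  rw [h5] at h4
  exact h4.trans (le_of_lt h3)

open Filter Topology Uniformity in
theorem sch_complete (n : ℕ) : CompleteSpace (Sch n) := by
  have : (𝓤 (Sch n)).IsCountablyGenerated := IsUniformAddGroup.uniformity_countably_generated
  refine UniformSpace.complete_of_cauchySeq_tendsto fun u hu => ?_
  have hC := sch_cauchy u hu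
  have hlim : ∀ (l : ℕ) (x : EuclideanSpace ℝ (Fin n)),
      ∃ g, Tendsto (fun i => iteratedFDeriv ℝ l (u i) x) atTop (𝓝 g) := by
    intro l x
    apply cauchySeq_tendsto_of_complete
    rw [Metric.cauchySeq_iff]
    intro ε hε
    obtain ⟨N, hN⟩ := hC 0 l (ε / 2) (by positivity)
    refine ⟨N, fun i hi j hj => ?_⟩
    have := hN i hi j hj x
    rw [dist_eq_norm]
    simp only [pow_zero, one_mul] at this
    linarith
  choose G hG using hlim
  have hG2 : ∀ (k l : ℕ) (ε : ℝ), 0 < ε → ∃ N, ∀ i ≥ N, ∀ x, ‖x‖ ^ k *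
      ‖iteratedFDeriv ℝ l (u i) x - G l x‖ ≤ ε := by
    intro k l ε hε
    obtain ⟨N, hN⟩ := hC k l ε hε
    refine ⟨N, fun i hi x => ?_⟩
    have ht : Tendsto (fun j => ‖x‖ ^ k *
      ‖iteratedFDeriv ℝ l (u i) x - iteratedFDeriv ℝ l (u j) x‖) atTop
      (𝓝 (‖x‖ ^ k * ‖iteratedFDeriv ℝ l (u i) x - G l x‖)) :=
      ((tendsto_const_nhds.sub (hG l x)).norm).const_mul _
    refine le_of_tendsto ht ?_
    filter_upwards [eventually_ge_atTop N] with j hj using hN i hi j hj x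
  have hunif : ∀ l, TendstoUniformly (fun i x => iteratedFDeriv ℝ l (u i) x) (G l) atTop := by
    intro l
    rw [Metric.tendstoUniformly_iff]
    intro ε hε
    obtain ⟨N, hN⟩ := hG2 0 l (ε / 2) (by positivity)
    filter_upwards [eventually_ge_atTop N] with i hi x
    have := hN i hi x
    rw [dist_comm, dist_eq_norm]
    simp only [pow_zero, one_mul] at this
    linarith
  have hder : ∀ l x, HasFDerivAt (G l) (G (l + 1) x).curryLeft x := by
    intro l x
    refine hasFDerivAt_of_tendstoUniformly (l := atTop)
      (f := fun i x => iteratedFDeriv ℝ l (u i) x)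
      (f' := fun i x => (iteratedFDeriv ℝ (l + 1) (u i) x).curryLeft)
      (g' := fun x => (G (l + 1) x).curryLeft) ?_ ?_ (hG l) x
    · exact (continuousMultilinearCurryLeftEquiv ℝ
        (fun _ : Fin (l + 1) => EuclideanSpace ℝ (Fin n)) ℂ).isometry.uniformContinuous.comp_tendstoUniformly
        (hunif (l + 1))
    · intro i y
      have := (contDiff_iff_ftaylorSeries.1 (u i).smooth')
      exact this.fderiv l (by exact_mod_cast ENat.natCast_lt_top l) y
  have hT : HasFTaylorSeriesUpTo (𝕜 := ℝ) ((⊤ : ℕ∞) : WithTop ℕ∞)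
      (fun x => (G 0 x).curry0) (fun x l => G l x) := by
    refine ⟨fun x => rfl, fun l _ x => hder l x, fun l _ => ?_⟩
    exact continuous_iff_continuousAt.2 fun x => (hder l x).continuousAt
  have hit : ∀ l x, G l x = iteratedFDeriv ℝ l (fun x => (G 0 x).curry0) x := fun l x =>
    hT.eq_iteratedFDeriv (by exact_mod_cast le_top) x
  let w : Sch n :=
    { toFun := fun x => (G 0 x).curry0
      smooth' := hT.contDiff
      decay' := by
        intro k l
        obtain ⟨N, hN⟩ := hG2 k l 1 one_pos
        refine ⟨1 + SchwartzMap.seminorm ℝ k l (u N), fun x => ?_⟩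
        rw [← hit l x]
        have h1 := hN N le_rfl x
        have h2 := SchwartzMap.le_seminorm ℝ k l (u N) x
        have h3 : ‖G l x‖ ≤ ‖iteratedFDeriv ℝ l (u N) x - G l x‖ + ‖iteratedFDeriv ℝ l (u N) x‖ := by
          rw [norm_sub_rev]
          simpa using norm_add_le (G l x - iteratedFDeriv ℝ l (u N) x) (iteratedFDeriv ℝ l (u N) x)
        have := mul_le_mul_of_nonneg_left h3 (by positivity : 0 ≤ ‖x‖ ^ k)
        linarith }
  refine ⟨w, ?_⟩
  rw [(schwartz_withSeminorms ℝ (EuclideanSpace ℝ (Fin n)) ℂ).tendsto_nhds_atTop]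
  rintro ⟨k, l⟩ ε hε
  obtain ⟨N, hN⟩ := hG2 k l (ε / 2) (by positivity)
  refine ⟨N, fun i hi => ?_⟩
  refine lt_of_le_of_lt (SchwartzMap.seminorm_le_bound ℝ k l _ (by positivity : 0 ≤ ε / 2) fun x => ?_)
    (by linarith)
  have h5 : iteratedFDeriv ℝ l (u i - w : Sch n) x = iteratedFDeriv ℝ l (u i) x - G l x := by
    have : ((u i - w : Sch n) : EuclideanSpace ℝ (Fin n) → ℂ) = (u i : _ → ℂ) - (w : _ → ℂ) := by
      ext y; simp
    rw [this, hit l x]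
    exact iteratedFDeriv_sub_apply ((u i).smooth l).contDiffAt (w.smooth l).contDiffAt
  rw [h5]
  exact hN i hi x

open Filter Topology Uniformity in
theorem sch_barrelled (n : ℕ) : BarrelledSpace ℂ (Sch n) := by
  have : (𝓤 (Sch n)).IsCountablyGenerated := IsUniformAddGroup.uniformity_countably_generated
  have := sch_complete n
  have : TopologicalSpace.IsCompletelyPseudoMetrizableSpace (Sch n) := inferInstance
  infer_instance

open Filter Topology LineDeriv in
theorem sch_deriv_step {n m : ℕ} (S : Sch n →ₗ[ℂ] Sch m)
    (hS : ∀ x, Continuous fun φ => S φ x) (h x : EuclideanSpace ℝ (Fin m)) :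
    Continuous fun φ => (∂_{h} (S φ) : Sch m) x := by
  have := sch_barrelled n
  let ev : EuclideanSpace ℝ (Fin m) → (Sch n →L[ℂ] ℂ) := fun y =>
    { toFun := fun φ => S φ y
      map_add' := by intro a b; simp
      map_smul' := by intro a b; simp
      cont := hS y }
  let g : ℕ → (Sch n →L[ℂ] ℂ) := fun k => (k : ℂ) • (ev (x + (k : ℝ)⁻¹ • h) - ev x)
  have hg : Tendsto (fun k φ => g k φ) atTop (𝓝 fun φ => (∂_{h} (S φ) : Sch m) x) := by
    rw [tendsto_pi_nhds]
    intro φ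
    have := ((S φ).hasFDerivAt x).lim h (c := fun k : ℕ => (k : ℝ)) (l := atTop)
      (by simpa using tendsto_natCast_atTop_atTop)
    rw [SchwartzMap.lineDerivOp_apply_eq_fderiv]
    refine this.congr fun k => ?_
    simp [g, ev]
  exact (continuousLinearMapOfTendsto g hg).cont

open LineDeriv in
theorem sch_iter_step {n m : ℕ} (S : Sch n →ₗ[ℂ] Sch m)
    (hS : ∀ x, Continuous fun φ => S φ x) (l : ℕ) (h : Fin l → EuclideanSpace ℝ (Fin m)) (x) :
    Continuous fun φ => iteratedFDeriv ℝ l (S φ) x h := by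
  simp_rw [← SchwartzMap.iteratedLineDerivOp_eq_iteratedFDeriv]
  induction l generalizing x with
  | zero => simpa using hS x
  | succ l ih =>
    simp_rw [iteratedLineDerivOp_succ_left]
    exact sch_deriv_step ((iteratedLineDerivOpCLM ℂ (Sch m) (Fin.tail h)).toLinearMap ∘ₗ S)
      (fun y => ih (Fin.tail h) y) (h 0) x

theorem sch_cont {n m : ℕ} (S : Sch n →ₗ[ℂ] Sch m)
    (hS : ∀ x, Continuous fun φ => S φ x) : Continuous S := by
  have := sch_barrelled n
  refine Seminorm.continuous_of_continuous_comp
    (schwartz_withSeminorms ℂ (EuclideanSpace ℝ (Fin m)) ℂ) S ?_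
  rintro ⟨k, l⟩
  refine Seminorm.continuous_of_lowerSemicontinuous _ ?_
  rw [lowerSemicontinuous_iff_isClosed_preimage]
  intro c
  by_cases hc : c < 0
  · convert isClosed_empty
    ext φ
    simp only [Set.mem_preimage, Set.mem_Iic, Set.mem_empty_iff_false, iff_false, not_le]
    exact hc.trans_le (apply_nonneg _ _)
  push Not at hc
  have : (((schwartzSeminormFamily ℂ (EuclideanSpace ℝ (Fin m)) ℂ (k, l)).comp S : Sch n → ℝ) ⁻¹'
      Set.Iic c) = ⋂ (x : EuclideanSpace ℝ (Fin m)) (h : Fin l → EuclideanSpace ℝ (Fin m)),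
      {φ : Sch n | ‖x‖ ^ k * ‖iteratedFDeriv ℝ l (S φ) x h‖ ≤ c * ∏ i, ‖h i‖} := by
    ext φ
    simp only [Set.mem_preimage, Set.mem_Iic, Set.mem_iInter, Set.mem_setOf_eq]
    constructor
    · intro H x h
      have h1 := (SchwartzMap.le_seminorm ℂ k l (S φ) x).trans H
      calc _ ≤ ‖x‖ ^ k * (‖iteratedFDeriv ℝ l (S φ) x‖ * ∏ i, ‖h i‖) := by
            gcongr; exact ContinuousMultilinearMap.le_opNorm _ _
        _ = (‖x‖ ^ k * ‖iteratedFDeriv ℝ l (S φ) x‖) * ∏ i, ‖h i‖ := by ring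
        _ ≤ _ := by gcongr
    · intro H
      refine SchwartzMap.seminorm_le_bound ℂ k l (S φ) hc fun x => ?_
      have : ‖(‖x‖ ^ k) • iteratedFDeriv ℝ l (S φ) x‖ ≤ c := by
        refine ContinuousMultilinearMap.opNorm_le_bound hc fun h => ?_
        simpa [norm_smul] using H x h
      simpa [norm_smul] using this
  rw [this]
  refine isClosed_iInter fun x => isClosed_iInter fun h => isClosed_le ?_ continuous_const
  exact continuous_const.mul (sch_iter_step S hS l h x).norm

/-- summability of Schwartz families: if `v` is a Schwartz family and
`T : 𝓢ₙ →ₗ 𝓢ₘ` is the operator generated by `v`, then for every tempered distribution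
`a ∈ 𝓢ₘ'`, the linear functional `φ ↦ a (T φ)` is continuous, i.e. a tempered
distribution on `ℝⁿ`. -/
theorem schwartzFamily_summable {n m : ℕ}
    (v : EuclideanSpace ℝ (Fin m) → (Sch n →L[ℂ] ℂ)) (hv : IsSchwartzFamily v)
    (T : Sch n →ₗ[ℂ] Sch m) (hT : ∀ (φ : Sch n) (p : EuclideanSpace ℝ (Fin m)), T φ p = v p φ)
    (a : Sch m →L[ℂ] ℂ) :
    Continuous fun φ : Sch n => a (T φ) := by
  refine a.continuous.comp (sch_cont T fun x => ?_)
  simp_rw [hT]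
  exact (v x).continuous
end

section
/- (Continuity of the operator generated by a Schwartz family.) Let v : ℝᵐ → (𝓢ₙ →L[ℂ] ℂ) be a Schwartz family, and let T : 𝓢ₙ →ₗ[ℂ] 𝓢ₘ be a linear map such that (T φ)(p) = v(p)(φ) for all φ ∈ 𝓢ₙ and p ∈ ℝᵐ. Then T is continuous with respect to the usual Fréchet topologies of 𝓢ₙ and 𝓢ₘ. -/
open Filter Topology in
theorem sch_sum_exists {n : ℕ} (d : ℕ → Sch n)
    (hd : ∀ k l, Summable (fun j => SchwartzMap.seminorm ℝ k l (d j))) :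
    ∃ g : Sch n, (∀ x, HasSum (fun j => d j x) (g x)) ∧
      ∀ k l, SchwartzMap.seminorm ℝ k l g ≤ ∑' j, SchwartzMap.seminorm ℝ k l (d j) := by
  have hb : ∀ (k : ℕ) (i : ℕ) (x : EuclideanSpace ℝ (Fin n)), (k : ℕ∞) ≤ (⊤ : ℕ∞) →
      ‖iteratedFDeriv ℝ k (d i) x‖ ≤ SchwartzMap.seminorm ℝ 0 k (d i) := fun k i x _ =>
    SchwartzMap.norm_iteratedFDeriv_le_seminorm ℝ (d i) k x
  have hs : ContDiff ℝ ((⊤ : ℕ∞) : WithTop ℕ∞) (fun x => ∑' j, d j x) :=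
    contDiff_tsum (fun i => (d i).smooth ⊤) (fun k _ => hd 0 k) hb
  have hbound : ∀ (k l : ℕ) (x : EuclideanSpace ℝ (Fin n)),
      ‖x‖ ^ k * ‖iteratedFDeriv ℝ l (fun x => ∑' j, d j x) x‖ ≤
        ∑' j, SchwartzMap.seminorm ℝ k l (d j) := by
    intro k l x
    rw [iteratedFDeriv_tsum_apply (fun i => (d i).smooth ⊤) (fun k _ => hd 0 k) hb
      (le_top : (l : ℕ∞) ≤ ⊤) x]
    have h1 : Summable (fun j => ‖iteratedFDeriv ℝ l (d j) x‖) :=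
      Summable.of_nonneg_of_le (fun _ => norm_nonneg _) (fun j => hb l j x le_top) (hd 0 l)
    calc _ ≤ ‖x‖ ^ k * ∑' j, ‖iteratedFDeriv ℝ l (d j) x‖ := by
          gcongr
          exact norm_tsum_le_tsum_norm h1
      _ = ∑' j, ‖x‖ ^ k * ‖iteratedFDeriv ℝ l (d j) x‖ := by rw [tsum_mul_left]
      _ ≤ _ := (h1.mul_left _).tsum_le_tsum
          (fun j => SchwartzMap.le_seminorm ℝ k l (d j) x) (hd k l)
  let g : Sch n := ⟨fun x => ∑' j, d j x, hs, fun k l => ⟨_, hbound k l⟩⟩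
  refine ⟨g, fun x => ?_, fun k l => ?_⟩
  · have : Summable (fun j => d j x) :=
      Summable.of_norm_bounded (hd 0 0) (fun j => SchwartzMap.norm_le_seminorm ℝ (d j) x)
    exact this.hasSum
  · exact SchwartzMap.seminorm_le_bound ℝ k l g
      (tsum_nonneg fun j => apply_nonneg _ _) (hbound k l)

open Filter Topology in
theorem sch_sum_tendsto {n : ℕ} (d : ℕ → Sch n)
    (hd : ∀ k l, Summable (fun j => SchwartzMap.seminorm ℝ k l (d j))) :
    ∃ g : Sch n, Tendsto (fun N => ∑ j ∈ Finset.range N, d j) atTop (𝓝 g) := by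
  obtain ⟨g, hg, -⟩ := sch_sum_exists d hd
  refine ⟨g, ?_⟩
  rw [(schwartz_withSeminorms ℝ (EuclideanSpace ℝ (Fin n)) ℂ).tendsto_nhds]
  rintro ⟨k, l⟩ ε hε
  have ht := tendsto_sum_nat_add (fun j => SchwartzMap.seminorm ℝ k l (d j))
  filter_upwards [ht.eventually (gt_mem_nhds hε)] with N hN
  refine lt_of_le_of_lt ?_ hN
  obtain ⟨g', hg', hb⟩ := sch_sum_exists (fun j => d (j + N))
    (fun k l => (summable_nat_add_iff N).2 (hd k l))
  have : g = (∑ j ∈ Finset.range N, d j) + g' := by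
    ext x
    have h1 := (hasSum_nat_add_iff' N).2 (hg x)
    have h2 := h1.unique (hg' x)
    simp only [add_apply, sum_apply]
    rw [← h2]; ring
  have h3 : (∑ j ∈ Finset.range N, d j) - g = - g' := by rw [this]; abel
  rw [h3, map_neg_eq_map]
  exact hb k l

instance sch_countable {n : ℕ} : (uniformity (Sch n)).IsCountablyGenerated :=
  IsUniformAddGroup.uniformity_countably_generated

open Filter Topology in
instance sch_complete_s4 {n : ℕ} : CompleteSpace (Sch n) := by
  refine UniformSpace.complete_of_convergent_controlled_sequences
    (fun N => {p : Sch n × Sch n | ∀ k ∈ Finset.range (N + 1), ∀ l ∈ Finset.range (N + 1),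
      SchwartzMap.seminorm ℝ k l (p.2 - p.1) < (1 / 2) ^ N}) ?_ ?_
  · intro N
    rw [uniformity_eq_comap_nhds_zero]
    refine ⟨{f | ∀ k ∈ Finset.range (N + 1), ∀ l ∈ Finset.range (N + 1),
      SchwartzMap.seminorm ℝ k l f < (1 / 2) ^ N}, ?_, fun p hp => hp⟩
    change ∀ᶠ f in 𝓝 (0 : Sch n), _
    rw [Finset.eventually_all]
    intro k _
    rw [Finset.eventually_all]
    intro l _
    have hc := (schwartz_withSeminorms ℝ (EuclideanSpace ℝ (Fin n)) ℂ).continuous_seminorm (k, l)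
    have := hc.tendsto 0
    rw [map_zero] at this
    exact this.eventually (gt_mem_nhds (by positivity))
  · intro u hu
    obtain ⟨g, hg⟩ := sch_sum_tendsto (fun j => u (j + 1) - u j) (fun k l => by
      rw [← summable_nat_add_iff (k + l)]
      refine Summable.of_nonneg_of_le (fun _ => apply_nonneg _ _) (fun j => ?_)
        ((summable_nat_add_iff (k + l)).2 summable_geometric_two)
      exact (hu (j + (k + l)) _ _ le_rfl (Nat.le_succ _) k
        (Finset.mem_range.2 (by omega)) l (Finset.mem_range.2 (by omega))).le)
    refine ⟨g + u 0, ?_⟩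
    have := hg.add_const (u 0)
    refine this.congr fun N => ?_
    rw [Finset.sum_range_sub]; abel

open Filter Topology LineDeriv in
theorem sch_deriv_cont {n m : ℕ} (T : Sch n →ₗ[ℂ] Sch m)
    (hT : ∀ p, Continuous (fun φ => T φ p)) (e : EuclideanSpace ℝ (Fin m)) (p) :
    Continuous (fun φ => (∂_{e} (T φ) : Sch m) p) := by
  let a : ℕ → ℝ := fun j => ((j : ℝ) + 1)⁻¹
  let g : ℕ → Sch n →L[ℂ] ℂ := fun j =>
    { toFun := fun φ => ((a j)⁻¹ : ℂ) * (T φ (p + a j • e) - T φ p)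
      map_add' := fun φ ψ => by simp [map_add]; ring
      map_smul' := fun c φ => by simp [map_smul]; ring
      cont := continuous_const.mul ((hT _).sub (hT _)) }
  have ht : Tendsto (fun j φ => g j φ) atTop (𝓝 (fun φ => (∂_{e} (T φ) : Sch m) p)) := by
    rw [tendsto_pi_nhds]
    intro φ
    rw [SchwartzMap.lineDerivOp_apply]
    have h1 := ((T φ).differentiableAt (x := p)).lineDifferentiableAt (v := e)|>.hasLineDerivAt
    have h2 := h1.tendsto_slope_zero
    have ha : Tendsto a atTop (𝓝[≠] 0) := by
      rw [tendsto_nhdsWithin_iff]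
      refine ⟨?_, Eventually.of_forall fun j => ?_⟩
      · simpa [a] using tendsto_one_div_add_atTop_nhds_zero_nat (𝕜 := ℝ)
      · have : a j > 0 := by positivity
        exact this.ne'
    refine (h2.comp ha).congr fun j => ?_
    simp [g, Complex.real_smul]
  exact (continuousLinearMapOfTendsto g ht).continuous

open Filter Topology LineDeriv in
theorem sch_iter_cont {n m : ℕ} (l : ℕ) (e : Fin l → EuclideanSpace ℝ (Fin m)) :
    ∀ (T : Sch n →ₗ[ℂ] Sch m)
    (_ : ∀ p, Continuous (fun φ => T φ p))  (p),
    Continuous (fun φ => (∂^{e} (T φ) : Sch m) p) := by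
  induction l with
  | zero => intro T hT p; simpa using hT p
  | succ l ih =>
    intro T hT p
    simp_rw [iteratedLineDerivOp_succ_right]
    exact ih (Fin.init e)
      ((lineDerivOpCLM ℂ (Sch m) (e (Fin.last l))).toLinearMap ∘ₗ T) (fun p => sch_deriv_cont T hT _ p) p

/-- the operator generated by a Schwartz family is continuous with respect to
the usual Fréchet topologies of `𝓢ₙ` and `𝓢ₘ`. -/
theorem continuous_operator_of_schwartzFamily {n m : ℕ}
    (v : EuclideanSpace ℝ (Fin m) → (Sch n →L[ℂ] ℂ)) (hv : IsSchwartzFamily v)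
    (T : Sch n →ₗ[ℂ] Sch m) (hT : ∀ (φ : Sch n) (p : EuclideanSpace ℝ (Fin m)), T φ p = v p φ) :
    Continuous T := by
  have hT' : ∀ p, Continuous (fun φ => T φ p) := fun p => by
    simp_rw [hT]; exact (v p).continuous
  have hW := schwartz_withSeminorms ℂ (EuclideanSpace ℝ (Fin m)) ℂ
  refine WithSeminorms.continuous_of_continuous_comp hW T ?_
  rintro ⟨k, l⟩
  refine Seminorm.continuous_of_lowerSemicontinuous _ ?_
  rw [lowerSemicontinuous_iff_isClosed_preimage]
  intro M
  by_cases hM : 0 ≤ M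
  · have : (((schwartzSeminormFamily ℂ (EuclideanSpace ℝ (Fin m)) ℂ (k, l)).comp T) ⁻¹' Set.Iic M)
        = ⋂ (x : EuclideanSpace ℝ (Fin m)) (e : Fin l → EuclideanSpace ℝ (Fin m)),
          {φ | ‖x‖ ^ k * ‖(LineDeriv.iteratedLineDerivOp e (T φ) : Sch m) x‖ ≤ M * ∏ i, ‖e i‖} := by
      ext φ
      simp only [Set.mem_preimage, Set.mem_Iic, Set.mem_iInter, Set.mem_ofPred_eq,
        Seminorm.comp_apply, SchwartzMap.schwartzSeminormFamily_apply,
        SchwartzMap.iteratedLineDerivOp_eq_iteratedFDeriv]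
      constructor
      · intro h x e
        calc _ ≤ ‖x‖ ^ k * (‖iteratedFDeriv ℝ l (T φ) x‖ * ∏ i, ‖e i‖) := by
              gcongr
              exact ContinuousMultilinearMap.le_opNorm _ _
          _ = (‖x‖ ^ k * ‖iteratedFDeriv ℝ l (T φ) x‖) * ∏ i, ‖e i‖ := by ring
          _ ≤ _ := by
              gcongr
              exact (SchwartzMap.le_seminorm ℂ k l (T φ) x).trans h
      · intro h
        refine SchwartzMap.seminorm_le_bound ℂ k l (T φ) hM fun x => ?_
        have : ‖(‖x‖ ^ k) • iteratedFDeriv ℝ l (T φ) x‖ ≤ M := by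
          refine ContinuousMultilinearMap.opNorm_le_bound hM fun e => ?_
          simpa [norm_smul] using h x e
        simpa [norm_smul] using this
    rw [this]
    exact isClosed_iInter fun x => isClosed_iInter fun e =>
      isClosed_le (continuous_const.mul (sch_iter_cont l e T hT' x).norm) continuous_const
  · convert isClosed_empty
    ext φ
    simp only [Set.mem_preimage, Set.mem_Iic, Set.mem_empty_iff_false, iff_false]
    intro h
    exact hM ((apply_nonneg _ _).trans h)
end

section
/- (Characterization of summability, equivalence (2)⇔(4).) Let T : 𝓢ₙ →ₗ[ℂ] 𝓢ₘ be a linear map between Schwartz spaces. Then T is topologically transposable — i.e., for every continuous linear functional a : 𝓢ₘ →L[ℂ] ℂ the composition φ ↦ a(T φ) is a continuous linear functional on 𝓢ₙ — if and only if T is continuous with respect to the usual Fréchet topologies of 𝓢ₙ and 𝓢ₘ. -/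
/-- In a seminormed space, weakly bounded families are bounded. -/
theorem bounded_of_weakly_bounded_normed {E : Type*} [SeminormedAddCommGroup E] [NormedSpace ℂ E]
    (s : Set E) (h : ∀ f : StrongDual ℂ E, ∃ C : ℝ, ∀ x ∈ s, ‖f x‖ ≤ C) :
    ∃ C : ℝ, ∀ x ∈ s, ‖x‖ ≤ C := by
  obtain ⟨C, hC⟩ := banach_steinhaus (E := StrongDual ℂ E) (F := ℂ) (ι := s)
    (g := fun x => ContinuousLinearMap.apply ℂ ℂ (x : E)) (by
      intro f
      obtain ⟨C, hC⟩ := h f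
      exact ⟨C, fun i => hC i i.2⟩)
  refine ⟨C, fun x hx => ?_⟩
  obtain ⟨g, hg1, hg⟩ := exists_dual_vector'' ℂ x
  have h1 := (ContinuousLinearMap.apply ℂ ℂ (x : E)).le_opNorm g
  have h2 := hC ⟨x, hx⟩
  simp only [ContinuousLinearMap.apply_apply, hg] at h1 h2
  have h3 : ‖((‖x‖ : ℝ) : ℂ)‖ = ‖x‖ := by simp
  calc ‖x‖ = ‖((‖x‖ : ℝ) : ℂ)‖ := h3.symm
    _ ≤ _ := h1
    _ ≤ ‖ContinuousLinearMap.apply ℂ ℂ (x : E)‖ * 1 := by gcongr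
    _ ≤ C := by rw [mul_one]; exact h2

theorem bounded_of_weakly_bounded_seminorm {F : Type*} [AddCommGroup F] [Module ℂ F]
    (p : Seminorm ℂ F) (s : Set F)
    (h : ∀ f : F →ₗ[ℂ] ℂ, (∃ K : ℝ, ∀ x, ‖f x‖ ≤ K * p x) → ∃ C : ℝ, ∀ x ∈ s, ‖f x‖ ≤ C) :
    ∃ C : ℝ, ∀ x ∈ s, p x ≤ C := by
  let _ : SeminormedAddCommGroup F := p.toAddGroupSeminorm.toSeminormedAddCommGroup
  let _ : NormedSpace ℂ F := ⟨fun a b => (map_smul_eq_mul p a b).le⟩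
  exact bounded_of_weakly_bounded_normed s fun f =>
    h f.toLinearMap ⟨‖f‖, fun x => f.le_opNorm x⟩

/-- characterization of summability, (2) ⇔ (4): a linear map `T : 𝓢ₙ → 𝓢ₘ`
is topologically transposable (i.e. `a ∘ T` is continuous for every tempered distribution
`a ∈ 𝓢ₘ'`) if and only if `T` is continuous with respect to the Fréchet topologies. -/
theorem transposable_iff_continuous {n m : ℕ} (T : Sch n →ₗ[ℂ] Sch m) :
    (∀ a : Sch m →L[ℂ] ℂ, Continuous fun φ : Sch n => a (T φ)) ↔ Continuous T := by
  refine ⟨fun H => ?_, fun hT a => a.continuous.comp hT⟩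
  have hw := schwartz_withSeminorms ℂ (EuclideanSpace ℝ (Fin m)) ℂ
  refine T.continuous_of_locally_bounded fun s hs => ?_
  rw [hw.isVonNBounded_iff_seminorm_bounded]
  intro i
  obtain ⟨C, hC⟩ := bounded_of_weakly_bounded_seminorm
    (schwartzSeminormFamily ℂ (EuclideanSpace ℝ (Fin m)) ℂ i) (T '' s) (by
      rintro f ⟨K, hK⟩
      have hf : Continuous f := by
        refine continuous_of_continuousAt_zero f ?_
        have hp := (hw.continuous_seminorm i).tendsto 0
        rw [map_zero] at hp
        have hp' := hp.const_mul K
        rw [mul_zero] at hp'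
        rw [ContinuousAt, map_zero]
        exact squeeze_zero_norm hK hp'
      let g : Sch n →L[ℂ] ℂ := ⟨f ∘ₗ T, H ⟨f, hf⟩⟩
      obtain ⟨r, hr⟩ := (NormedSpace.isVonNBounded_iff' ℂ).1 (hs.image g)
      refine ⟨r, ?_⟩
      rintro _ ⟨x, hx, rfl⟩
      exact hr _ ⟨x, hx, rfl⟩)
  exact ⟨max C 0 + 1, by positivity, fun x hx => by
    have := hC x hx
    have := le_max_left C 0
    linarith⟩
end
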